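/- arXiv:2309.14551 — 10 statements merged into one kernel-verified Lean document; each statement's English description precedes it below -/
import Mathlib

section
/- For every block-reward rate p_B with 0 < p_B ≤ c, every cost c > 0, every discount factor δ ∈ (0,1], every transaction value v ≥ 0, and every natural number N ≥ 1, there exists a penalty parameter ξ₀ > 0 such that for all ξ ≥ ξ₀ the attacker's ex-ante expected profit is negative: δ^(N−1)·(v + p_B·⌈N·(1+ξ)⌉) − c·∑_{n=0}^{⌈N·(1+ξ)⌉−1} δ^(n/(1+ξ))·(1+ξ)^n < 0. -/
open Finset

/-!
Put `y = 1 + ξ`. The attacker's revenue grows only linearly in `y`, whereas every fixed block `k` of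
the attacker chain eventually contributes `δ ^ (k / y) * y ^ k ~ y ^ k` to the cost, because the
discount `δ ^ (k / y)` tends to `1` and the number of blocks is unbounded. The block `k = 2` alone
therefore outweighs the revenue.
-/

open Filter Topology Asymptotics

theorem tendsto_const_rpow_div_atTop {δ : ℝ} (hδ : 0 < δ) (a : ℝ) :
    Tendsto (fun y : ℝ ↦ δ ^ (a / y)) atTop (𝓝 1) := by
  have exponent_tendsto : Tendsto (fun y : ℝ ↦ a / y) atTop (𝓝 0) :=
    tendsto_const_nhds.div_atTop tendsto_id
  simpa only [Real.rpow_zero] using tendsto_const_nhds.rpow exponent_tendsto (Or.inl hδ.ne')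

theorem isEquivalent_const_rpow_div_mul {δ : ℝ} (hδ : 0 < δ) (a : ℝ) (f : ℝ → ℝ) :
    (fun y ↦ δ ^ (a / y) * f y) ~[atTop] f := by
  have discount_equivalent : (fun y : ℝ ↦ δ ^ (a / y)) ~[atTop] fun _ ↦ 1 :=
    (isEquivalent_const_iff_tendsto one_ne_zero).2 (tendsto_const_rpow_div_atTop hδ a)
  simpa only [Pi.mul_def, one_mul] using discount_equivalent.mul (IsEquivalent.refl (u := f))

theorem isBigO_natCeil_mul_atTop {a : ℝ} (ha : 0 ≤ a) :
    (fun y : ℝ ↦ (⌈a * y⌉₊ : ℝ)) =O[atTop] fun y ↦ y :=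
  isBigO_of_div_tendsto_nhds ((eventually_ne_atTop 0).mono fun _ hy h ↦ absurd h hy) a
    (tendsto_nat_ceil_mul_div_atTop ha)

theorem isBigO_add_mul_natCeil_mul_atTop (v p : ℝ) {a : ℝ} (ha : 0 ≤ a) :
    (fun y : ℝ ↦ v + p * (⌈a * y⌉₊ : ℝ)) =O[atTop] fun y ↦ y :=
  (isLittleO_const_id_atTop v).isBigO.add ((isBigO_natCeil_mul_atTop ha).const_mul_left p)

/-- The discounted total hashrate spent on mining `m` blocks, so that `c * discountedHashrate δ y m`
is the attacker's cost. Here `y` is the growth factor `1 + ξ` of the hashrate per block, and block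
`n` is mined at time `n / y`. -/
noncomputable def discountedHashrate (δ y : ℝ) (m : ℕ) : ℝ :=
  ∑ n ∈ Finset.range m, δ ^ ((n : ℝ) / y) * y ^ n

section discountedHashrate

variable {δ y : ℝ} {m : ℕ} {M : ℝ → ℕ}

theorem discountedHashrate_pos (hδ : 0 < δ) (hy : 0 < y) (hm : 0 < m) :
    0 < discountedHashrate δ y m :=
  Finset.sum_pos (fun _ _ ↦ by positivity) (Finset.nonempty_range_iff.2 hm.ne')

theorem rpow_div_mul_pow_le_discountedHashrate {k : ℕ} (hδ : 0 ≤ δ) (hy : 0 ≤ y)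
    (hkm : k < m) : δ ^ ((k : ℝ) / y) * y ^ k ≤ discountedHashrate δ y m :=
  Finset.single_le_sum (f := fun n : ℕ ↦ δ ^ ((n : ℝ) / y) * y ^ n)
    (fun _ _ ↦ by positivity) (Finset.mem_range.2 hkm)

theorem isBigO_pow_discountedHashrate (hδ : 0 < δ) (hM : Tendsto M atTop atTop)
    (k : ℕ) : (fun y ↦ y ^ k) =O[atTop] fun y ↦ discountedHashrate δ y (M y) := by
  refine (isEquivalent_const_rpow_div_mul hδ k (· ^ k)).isBigO_symm.trans (.of_bound' ?_)
  filter_upwards [eventually_ge_atTop 0, hM.eventually_gt_atTop k] with y hy hkM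
  have block_nonneg : 0 ≤ δ ^ ((k : ℝ) / y) * y ^ k := by positivity
  rw [Real.norm_of_nonneg block_nonneg]
  exact (rpow_div_mul_pow_le_discountedHashrate hδ.le hy hkM).trans (Real.le_norm_self _)

theorem isLittleO_id_discountedHashrate (hδ : 0 < δ) (hM : Tendsto M atTop atTop) :
    (fun y ↦ y) =o[atTop] fun y ↦ discountedHashrate δ y (M y) := by
  have id_isLittleO_sq : (fun y : ℝ ↦ y) =o[atTop] fun y ↦ y ^ 2 := by
    simpa only [pow_one] using isLittleO_pow_pow_atTop_of_lt (𝕜 := ℝ) one_lt_two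
  exact id_isLittleO_sq.trans_isBigO (isBigO_pow_discountedHashrate hδ hM 2)

theorem eventually_lt_mul_discountedHashrate {c : ℝ} {f : ℝ → ℝ} (hc : 0 < c)
    (hδ : 0 < δ) (hM : Tendsto M atTop atTop) (hf : f =O[atTop] fun y ↦ y) :
    ∀ᶠ y in atTop, f y < c * discountedHashrate δ y (M y) := by
  have cost_pos : ∀ᶠ y in atTop, 0 < c * discountedHashrate δ y (M y) := by
    filter_upwards [eventually_gt_atTop 0, hM.eventually_gt_atTop 0] with y hy hMy
    exact mul_pos hc (discountedHashrate_pos hδ hy hMy)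
  have f_isLittleO : f =o[atTop] fun y ↦ c * discountedHashrate δ y (M y) :=
    (hf.trans_isLittleO (isLittleO_id_discountedHashrate hδ hM)).const_mul_right hc.ne'
  have norm_lt := f_isLittleO.eventuallyLT_norm_of_eventually_pos
    (cost_pos.mono fun _ h ↦ norm_pos_iff.2 h.ne')
  filter_upwards [cost_pos, norm_lt] with y hpos hlt
  rw [Real.norm_of_nonneg hpos.le] at hlt
  exact (Real.le_norm_self _).trans_lt hlt

end discountedHashrate

theorem adess_penalty_makes_attack_unprofitable_general
    (c p_B δ v N : ℝ) (hc : 0 < c) (hδ : 0 < δ) (hN : 0 < N) :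
    ∃ ξ₀ > (0 : ℝ), ∀ ξ ≥ ξ₀,
      δ ^ (N - 1) * (v + p_B * (⌈N * (1 + ξ)⌉₊ : ℝ)) -
        c * ∑ n ∈ Finset.range ⌈N * (1 + ξ)⌉₊, δ ^ ((n : ℝ) / (1 + ξ)) * (1 + ξ) ^ n < 0 := by
  have blocks_tendsto : Tendsto (fun y : ℝ ↦ ⌈N * y⌉₊) atTop atTop :=
    tendsto_nat_ceil_atTop.comp (tendsto_id.const_mul_atTop hN)
  have revenue_lt_cost : ∀ᶠ y in atTop,
      δ ^ (N - 1) * (v + p_B * (⌈N * y⌉₊ : ℝ)) < c * discountedHashrate δ y ⌈N * y⌉₊ :=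
    eventually_lt_mul_discountedHashrate hc hδ blocks_tendsto
      ((isBigO_add_mul_natCeil_mul_atTop v p_B hN.le).const_mul_left _)
  have unprofitable :=
    (tendsto_atTop_add_const_left atTop (1 : ℝ) tendsto_id).eventually revenue_lt_cost
  obtain ⟨ξ₀, ξ₀_pos, h⟩ :=
    ((eventually_gt_atTop 0).and (eventually_forall_ge_atTop.2 unprofitable)).exists
  exact ⟨ξ₀, ξ₀_pos, fun ξ hξ ↦ sub_neg.2 (h ξ hξ)⟩

theorem adess_penalty_makes_attack_unprofitable
    (c p_B δ v : ℝ) (N : ℕ)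
    (hpB : 0 < p_B) (hpBc : p_B ≤ c) (hc : 0 < c)
    (hδ0 : 0 < δ) (hδ1 : δ ≤ 1) (hv : 0 ≤ v) (hN : 1 ≤ N) :
    ∃ ξ₀ > (0 : ℝ), ∀ ξ ≥ ξ₀,
      δ ^ ((N : ℝ) - 1) * (v + p_B * (⌈(N : ℝ) * (1 + ξ)⌉₊ : ℝ)) -
        c * ∑ n ∈ Finset.range ⌈(N : ℝ) * (1 + ξ)⌉₊,
          δ ^ ((n : ℝ) / (1 + ξ)) * (1 + ξ) ^ n < 0 :=
  adess_penalty_makes_attack_unprofitable_general c p_B δ v N hc hδ0 (Nat.cast_pos.2 hN)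
end

section
/- For every block-reward rate p_B with 0 < p_B ≤ c, every cost c > 0, every discount factor δ ∈ (0,1], every transaction value v ≥ 0, and every natural number N ≥ 1, the attacker's ex-ante expected profit tends to −∞ as the penalty parameter tends to +∞: the function ξ ↦ δ^(N−1)·(v + p_B·⌈N·(1+ξ)⌉) − c·∑_{n=0}^{⌈N·(1+ξ)⌉−1} δ^(n/(1+ξ))·(1+ξ)^n tends to −∞ as ξ → +∞. -/
open Finset Filter

/-!
Put `x = 1 + ξ`. The number of attack blocks is asymptotic to `N * x`, so the revenue grows only
linearly in `x`. Block `k` alone costs `δ ^ (k / x) * x ^ k`, which is asymptotic to `x ^ k`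
because the discount `δ ^ (k / x)` tends to `1`. With `k = 2` the cost is superlinear, and the
profit divided by `x` already tends to `-∞`.
-/

open Topology

/-- The discounted cost, in units of the cost `c` of an unpenalized block, of mining `M` blocks when
the penalty multiplies the difficulty by `x = 1 + ξ` from each block to the next. -/
noncomputable def discountedCost (δ x : ℝ) (M : ℕ) : ℝ :=
  ∑ n ∈ range M, δ ^ ((n : ℝ) / x) * x ^ n

section

variable {δ x : ℝ}

theorem rpow_div_mul_pow_le_discountedCost (hδ : 0 ≤ δ) (hx : 0 ≤ x) {k M : ℕ} (hk : k < M) :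
    δ ^ ((k : ℝ) / x) * x ^ k ≤ discountedCost δ x M :=
  single_le_sum (f := fun n : ℕ => δ ^ ((n : ℝ) / x) * x ^ n)
    (fun _ _ => by positivity) (mem_range.mpr hk)

theorem tendsto_rpow_const_div_atTop (hδ : δ ≠ 0) (a : ℝ) :
    Tendsto (fun x : ℝ => δ ^ (a / x)) atTop (𝓝 1) := by
  have h_exponent : Tendsto (fun x : ℝ => a / x) atTop (𝓝 0) := tendsto_id.const_div_atTop a
  simpa only [Real.rpow_zero, Function.comp_def] using
    (Real.continuousAt_const_rpow hδ).tendsto.comp h_exponent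

theorem tendsto_discountedCost_div_pow_atTop (hδ : 0 < δ) {M : ℝ → ℕ}
    (hM : Tendsto M atTop atTop) (k : ℕ) :
    Tendsto (fun x => discountedCost δ x (M x) / x ^ k) atTop atTop := by
  have h_term : Tendsto (fun x : ℝ => δ ^ (((k + 1 : ℕ) : ℝ) / x) * x) atTop atTop :=
    (tendsto_rpow_const_div_atTop hδ.ne' _).pos_mul_atTop one_pos tendsto_id
  refine tendsto_atTop_mono' _ ?_ h_term
  filter_upwards [eventually_gt_atTop 0, hM.eventually_gt_atTop (k + 1)] with x hx hkM
  rw [le_div_iff₀ (pow_pos hx k), mul_assoc, ← pow_succ']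
  exact rpow_div_mul_pow_le_discountedCost hδ.le hx.le hkM

end

theorem tendsto_mul_add_mul_natCeil_div_atTop (a v p : ℝ) {N : ℝ} (hN : 0 ≤ N) :
    Tendsto (fun x : ℝ => a * (v + p * ⌈N * x⌉₊) / x) atTop (𝓝 (a * (p * N))) := by
  have h_const : Tendsto (fun x : ℝ => v / x) atTop (𝓝 0) := tendsto_id.const_div_atTop v
  have h_ceil : Tendsto (fun x : ℝ => (⌈N * x⌉₊ : ℝ) / x) atTop (𝓝 N) :=
    tendsto_nat_ceil_mul_div_atTop hN
  convert (h_const.add (h_ceil.const_mul p)).const_mul a using 2 <;> ring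

theorem adess_profit_tendsto_neg_infty_general {c δ N : ℝ} (p_B v : ℝ)
    (hc : 0 < c) (hδ : 0 < δ) (hN : 0 < N) :
    Tendsto
      (fun ξ : ℝ =>
        δ ^ (N - 1) * (v + p_B * (⌈N * (1 + ξ)⌉₊ : ℝ)) -
          c * ∑ n ∈ range ⌈N * (1 + ξ)⌉₊, δ ^ ((n : ℝ) / (1 + ξ)) * (1 + ξ) ^ n)
      atTop atBot := by
  suffices h_profit : Tendsto
      (fun x : ℝ => δ ^ (N - 1) * (v + p_B * ⌈N * x⌉₊) - c * discountedCost δ x ⌈N * x⌉₊)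
      atTop atBot from h_profit.comp (tendsto_atTop_add_const_left _ 1 tendsto_id)
  have h_blocks : Tendsto (fun x : ℝ => ⌈N * x⌉₊) atTop atTop :=
    tendsto_nat_ceil_atTop.comp (tendsto_id.const_mul_atTop hN)
  have h_revenue := tendsto_mul_add_mul_natCeil_div_atTop (δ ^ (N - 1)) v p_B hN.le
  have h_cost : Tendsto (fun x => c * (discountedCost δ x ⌈N * x⌉₊ / x ^ 1)) atTop atTop :=
    (tendsto_discountedCost_div_pow_atTop hδ h_blocks 1).const_mul_atTop hc
  have h_ratio := h_revenue.add_atBot (tendsto_neg_atTop_atBot.comp h_cost)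
  refine (tendsto_id.atTop_mul_atBot₀ h_ratio).congr' ?_
  filter_upwards [eventually_ne_atTop 0] with x hx
  simp only [id, Function.comp_apply]
  field_simp
  ring

theorem adess_profit_tendsto_neg_infty
    (c p_B δ v : ℝ) (N : ℕ)
    (hpB : 0 < p_B) (hpBc : p_B ≤ c) (hc : 0 < c)
    (hδ0 : 0 < δ) (hδ1 : δ ≤ 1) (hv : 0 ≤ v) (hN : 1 ≤ N) :
    Filter.Tendsto
      (fun ξ : ℝ =>
        δ ^ ((N : ℝ) - 1) * (v + p_B * (⌈(N : ℝ) * (1 + ξ)⌉₊ : ℝ)) -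
          c * ∑ n ∈ Finset.range ⌈(N : ℝ) * (1 + ξ)⌉₊,
            δ ^ ((n : ℝ) / (1 + ξ)) * (1 + ξ) ^ n)
      Filter.atTop Filter.atBot :=
  adess_profit_tendsto_neg_infty_general p_B v hc hδ0 (Nat.cast_pos.mpr hN)
end

section
/- In the undiscounted case δ = 1: for every penalty parameter ξ > 0, every natural number N ≥ 1, and all reals c, p_B with 0 < p_B ≤ c, there exists v̄ > 0 such that for every transaction value v with 0 ≤ v < v̄ the attacker's profit is negative: v + p_B·⌈N·(1+ξ)⌉ − c·∑_{n=0}^{⌈N·(1+ξ)⌉−1} (1+ξ)^n < 0. -/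
open Finset

section OrderedSemiring

variable {R : Type*} [Semiring R]

theorem one_lt_ceil_natCast_mul [LinearOrder R] [IsStrictOrderedRing R] [FloorSemiring R]
    {N : ℕ} {x : R} (hN : 1 ≤ N) (hx : 1 < x) : 1 < ⌈(N : R) * x⌉₊ := by
  rw [Nat.lt_ceil, Nat.cast_one]
  exact one_lt_mul (Nat.one_le_cast.mpr hN) hx

variable [PartialOrder R] [IsStrictOrderedRing R]

theorem natCast_lt_geom_sum {x : R} {n : ℕ} (hx : 1 < x) (hn : 1 < n) :
    (n : R) < ∑ i ∈ range n, x ^ i :=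
  calc (n : R) = ∑ _i ∈ range n, (1 : R) := by simp
    _ < ∑ i ∈ range n, x ^ i :=
      sum_lt_sum (fun _ _ ↦ one_le_pow₀ hx.le) ⟨1, mem_range.mpr hn, by rwa [pow_one]⟩

theorem mul_natCast_lt_mul_geom_sum {p c x : R} {n : ℕ} (hpc : p ≤ c) (hc : 0 < c) (hx : 1 < x)
    (hn : 1 < n) : p * n < c * ∑ i ∈ range n, x ^ i :=
  calc p * n ≤ c * n := mul_le_mul_of_nonneg_right hpc n.cast_nonneg
    _ < c * ∑ i ∈ range n, x ^ i := mul_lt_mul_of_pos_left (natCast_lt_geom_sum hx hn) hc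

end OrderedSemiring

theorem adess_corollary_small_transactions_unprofitable
    (c p_B ξ : ℝ) (N : ℕ)
    (hξ : 0 < ξ) (hN : 1 ≤ N) (hpB : 0 < p_B) (hpBc : p_B ≤ c) :
    ∃ vbar > (0 : ℝ), ∀ v : ℝ, 0 ≤ v → v < vbar →
      v + p_B * (⌈(N : ℝ) * (1 + ξ)⌉₊ : ℝ) -
        c * ∑ n ∈ Finset.range ⌈(N : ℝ) * (1 + ξ)⌉₊, (1 + ξ) ^ n < 0 := by
  have one_lt_growth : 1 < 1 + ξ := lt_add_of_pos_right 1 hξ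
  have one_lt_length : 1 < ⌈(N : ℝ) * (1 + ξ)⌉₊ := one_lt_ceil_natCast_mul hN one_lt_growth
  have reward_lt_cost : p_B * (⌈(N : ℝ) * (1 + ξ)⌉₊ : ℝ) <
      c * ∑ n ∈ Finset.range ⌈(N : ℝ) * (1 + ξ)⌉₊, (1 + ξ) ^ n :=
    mul_natCast_lt_mul_geom_sum hpBc (hpB.trans_le hpBc) one_lt_growth one_lt_length
  refine ⟨_, sub_pos.mpr reward_lt_cost, fun v _ hv ↦ ?_⟩
  exact sub_neg.mpr (lt_sub_iff_add_lt.mp hv)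
end

section
/- Let N ≥ 1 be a natural number and let e, ξ be reals with 0 < e < ξ. Then (a) N·(1+ξ) > N + e, and (b) with full per-block mining-puzzle difficulty adjustment the total ADESS attack hashrate exceeds the Nakamoto attack hashrate: ∑_{n=0}^{⌈N·(1+ξ)⌉−1} (1+ξ)^n > N + e. -/
open Finset

section OrderedSemiring

variable {R : Type*} [Semiring R]

theorem add_lt_mul_one_add [PartialOrder R] [IsStrictOrderedRing R] {a e ξ : R}
    (ha : 1 ≤ a) (hξ : 0 ≤ ξ) (heξ : e < ξ) : a + e < a * (1 + ξ) :=
  calc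
    a + e < a + ξ := by gcongr
    _ ≤ a + a * ξ := by gcongr; exact le_mul_of_one_le_left hξ ha
    _ = a * (1 + ξ) := by rw [mul_add, mul_one]

theorem natCast_le_geom_sum [PartialOrder R] [IsOrderedRing R] {x : R} (hx : 1 ≤ x) (m : ℕ) :
    (m : R) ≤ ∑ n ∈ range m, x ^ n := by
  simpa using card_nsmul_le_sum (range m) (x ^ ·) 1 fun n _ => one_le_pow₀ hx

variable [LinearOrder R] [FloorSemiring R]

theorem le_geom_sum_range_ceil [IsOrderedRing R] {x : R} (hx : 1 ≤ x) (a : R) :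
    a ≤ ∑ n ∈ range ⌈a⌉₊, x ^ n :=
  (Nat.le_ceil a).trans (natCast_le_geom_sum hx ⌈a⌉₊)

theorem adess_hashrate_exceeds_nakamoto_general [IsStrictOrderedRing R] {a e ξ : R}
    (ha : 1 ≤ a) (hξ : 0 ≤ ξ) (heξ : e < ξ) :
    a * (1 + ξ) > a + e ∧ (∑ n ∈ range ⌈a * (1 + ξ)⌉₊, (1 + ξ) ^ n) > a + e := by
  have nakamoto_lt : a + e < a * (1 + ξ) := add_lt_mul_one_add ha hξ heξ
  have one_le_growth : 1 ≤ 1 + ξ := le_add_of_nonneg_right hξ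
  exact ⟨nakamoto_lt, nakamoto_lt.trans_le (le_geom_sum_range_ceil one_le_growth _)⟩

end OrderedSemiring

theorem adess_hashrate_exceeds_nakamoto
    (N : ℕ) (e ξ : ℝ) (hN : 1 ≤ N) (he : 0 < e) (heξ : e < ξ) :
    (N : ℝ) * (1 + ξ) > (N : ℝ) + e ∧
      (∑ n ∈ Finset.range ⌈(N : ℝ) * (1 + ξ)⌉₊, (1 + ξ) ^ n) > (N : ℝ) + e :=
  adess_hashrate_exceeds_nakamoto_general (Nat.one_le_cast.2 hN) (he.trans heξ).le heξ
end

section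
/- Let δ ∈ (0,1) and let M ≥ 2 be a natural number. Then the total discounted attack cost ξ ↦ ∑_{n=0}^{M−1} δ^(n/(1+ξ))·(1+ξ)^n is strictly increasing on [0, ∞). -/
open Finset

theorem strictMonoOn_sum {ι α β : Type*} [Preorder α] [AddCommMonoid β] [PartialOrder β]
    [IsOrderedCancelAddMonoid β] {s : Finset ι} {f : ι → α → β} {t : Set α}
    (hmono : ∀ i ∈ s, MonotoneOn (f i) t) (hstrict : ∃ i ∈ s, StrictMonoOn (f i) t) :
    StrictMonoOn (fun x => ∑ i ∈ s, f i x) t := by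
  obtain ⟨j, hj, hfj⟩ := hstrict
  exact fun x hx y hy hxy =>
    sum_lt_sum (fun i hi => hmono i hi hx hy hxy.le) ⟨j, hj, hfj hx hy hxy⟩

section Summand

variable {δ p : ℝ}

theorem monotoneOn_rpow_div (hδ0 : 0 < δ) (hδ1 : δ ≤ 1) (hp : 0 ≤ p) :
    MonotoneOn (fun x : ℝ => δ ^ (p / x)) (Set.Ioi 0) := fun _ hx _ _ hxy =>
  Real.antitone_rpow_of_base_le_one hδ0 hδ1 (div_le_div_of_nonneg_left hp hx hxy)

theorem monotoneOn_rpow_div_mul_pow (hδ0 : 0 < δ) (hδ1 : δ ≤ 1) (hp : 0 ≤ p) (n : ℕ) :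
    MonotoneOn (fun x : ℝ => δ ^ (p / x) * x ^ n) (Set.Ioi 0) :=
  (monotoneOn_rpow_div hδ0 hδ1 hp).mul
    (fun _ hx _ _ hxy => pow_le_pow_left₀ (le_of_lt hx) hxy n)
    (fun _ _ => Real.rpow_nonneg hδ0.le _) (fun _ hx => pow_nonneg (le_of_lt hx) n)

theorem strictMonoOn_rpow_div_mul_pow (hδ0 : 0 < δ) (hδ1 : δ ≤ 1) (hp : 0 ≤ p) {n : ℕ}
    (hn : n ≠ 0) : StrictMonoOn (fun x : ℝ => δ ^ (p / x) * x ^ n) (Set.Ioi 0) := by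
  intro x hx y hy hxy
  have hx0 : 0 ≤ x := le_of_lt hx
  exact mul_lt_mul' (monotoneOn_rpow_div hδ0 hδ1 hp hx hy hxy.le) (pow_lt_pow_left₀ hxy hx0 hn)
    (pow_nonneg hx0 n) (Real.rpow_pos_of_pos hδ0 _)

end Summand

theorem adess_total_cost_strictMono_general {δ : ℝ} {s : Finset ℕ} (hδ0 : 0 < δ) (hδ1 : δ ≤ 1)
    (hs : ∃ n ∈ s, n ≠ 0) :
    StrictMonoOn (fun ξ : ℝ => ∑ n ∈ s, δ ^ ((n : ℝ) / (1 + ξ)) * (1 + ξ) ^ n)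
      (Set.Ioi (-1)) := by
  have hcost : StrictMonoOn (fun x : ℝ => ∑ n ∈ s, δ ^ ((n : ℝ) / x) * x ^ n) (Set.Ioi 0) := by
    obtain ⟨n, hn, hn0⟩ := hs
    exact strictMonoOn_sum
      (fun k _ => monotoneOn_rpow_div_mul_pow hδ0 hδ1 k.cast_nonneg k)
      ⟨n, hn, strictMonoOn_rpow_div_mul_pow hδ0 hδ1 n.cast_nonneg hn0⟩
  have hmaps : Set.MapsTo (fun ξ : ℝ => 1 + ξ) (Set.Ioi (-1)) (Set.Ioi 0) :=
    fun _ hξ => Set.mem_Ioi.mpr (neg_lt_iff_pos_add'.mp hξ)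
  exact hcost.comp (add_right_strictMono.strictMonoOn _) hmaps

theorem adess_total_cost_strictMono
    (δ : ℝ) (M : ℕ) (hδ0 : 0 < δ) (hδ1 : δ < 1) (hM : 2 ≤ M) :
    StrictMonoOn
      (fun ξ : ℝ => ∑ n ∈ Finset.range M, δ ^ ((n : ℝ) / (1 + ξ)) * (1 + ξ) ^ n)
      (Set.Ici (0 : ℝ)) :=
  (adess_total_cost_strictMono_general hδ0 hδ1.le ⟨1, mem_range.mpr hM, one_ne_zero⟩).mono
    (Set.Ici_subset_Ioi.mpr neg_one_lt_zero)
end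

section
/- Let δ ∈ (0,1) and let n ≥ 2 be a natural number. Then the function ξ ↦ δ^(n/(1+ξ))·(1+ξ)^n is strictly convex on the interval (1/(n−1), ∞). -/
/-! With `u = 1 + ξ`, the cost is `u ^ p * exp (a / u)` for `p = n` and `a = p * log δ`. Its second
derivative is `u ^ (p - 4) * exp (a / u)` times the quadratic
`p * (p - 1) * u ^ 2 - 2 * a * (p - 1) * u + a ^ 2`, and `p` times this quadratic is
`(p - 1) * (p * u - a) ^ 2 + a ^ 2`, which is positive for `p > 1` and `u > 0`. -/

open Real Set

theorem hasDerivAt_rpow_mul_exp_div (p a : ℝ) {u : ℝ} (hu : 0 < u) :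
    HasDerivAt (fun u : ℝ => u ^ p * exp (a / u))
      (p * (u ^ (p - 1) * exp (a / u)) - a * (u ^ (p - 2) * exp (a / u))) u := by
  have h_exp : HasDerivAt (fun u : ℝ => exp (a / u)) (exp (a / u) * (a * -(u ^ 2)⁻¹)) u := by
    simpa only [div_eq_mul_inv] using ((hasDerivAt_inv hu.ne').const_mul a).exp
  have h_pow : u ^ (p - 2) = u ^ p * (u ^ 2)⁻¹ := by
    rw [rpow_sub hu, rpow_two, div_eq_mul_inv]
  refine ((hasDerivAt_rpow_const (p := p) (.inl hu.ne')).mul h_exp).congr_deriv ?_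
  rw [h_pow]
  ring

theorem deriv2_rpow_mul_exp_div (p a : ℝ) {u : ℝ} (hu : 0 < u) :
    deriv^[2] (fun u : ℝ => u ^ p * exp (a / u)) u =
      u ^ (p - 4) * exp (a / u) * (p * (p - 1) * u ^ 2 - 2 * a * (p - 1) * u + a ^ 2) := by
  have h_deriv : EqOn (deriv fun u : ℝ => u ^ p * exp (a / u))
      (fun u => p * (u ^ (p - 1) * exp (a / u)) - a * (u ^ (p - 2) * exp (a / u))) (Ioi 0) :=
    fun _ hv => (hasDerivAt_rpow_mul_exp_div p a hv).deriv
  have h_deriv2 := ((hasDerivAt_rpow_mul_exp_div (p - 1) a hu).const_mul p).sub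
    ((hasDerivAt_rpow_mul_exp_div (p - 2) a hu).const_mul a)
  have h_pow_two : u ^ (p - 2) = u ^ (p - 4) * u ^ 2 := by
    rw [← rpow_two, ← rpow_add hu]
    ring_nf
  have h_pow_three : u ^ (p - 3) = u ^ (p - 4) * u := by
    rw [← rpow_add_one hu.ne']
    ring_nf
  calc deriv^[2] (fun u : ℝ => u ^ p * exp (a / u)) u
      = deriv (fun u => p * (u ^ (p - 1) * exp (a / u)) - a * (u ^ (p - 2) * exp (a / u))) u :=
        h_deriv.deriv isOpen_Ioi hu
    _ = p * ((p - 1) * (u ^ (p - 2) * exp (a / u)) - a * (u ^ (p - 3) * exp (a / u))) -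
          a * ((p - 2) * (u ^ (p - 3) * exp (a / u)) - a * (u ^ (p - 4) * exp (a / u))) := by
        refine h_deriv2.deriv.trans ?_
        ring_nf
    _ = _ := by
        rw [h_pow_two, h_pow_three]
        ring

theorem quadratic_pos_of_one_lt {p u : ℝ} (hp : 1 < p) (hu : u ≠ 0) (a : ℝ) :
    0 < p * (p - 1) * u ^ 2 - 2 * a * (p - 1) * u + a ^ 2 := by
  have hp_sub : 0 < p - 1 := sub_pos.mpr hp
  have hp_pos : 0 < p := one_pos.trans hp
  have h_square : p * (p * (p - 1) * u ^ 2 - 2 * a * (p - 1) * u + a ^ 2) =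
      (p - 1) * (p * u - a) ^ 2 + a ^ 2 := by ring
  refine pos_of_mul_pos_right (a := p) ?_ hp_pos.le
  rw [h_square]
  rcases eq_or_ne a 0 with rfl | ha
  · simpa using mul_pos hp_sub (by positivity : 0 < (p * u) ^ 2)
  · exact add_pos_of_nonneg_of_pos (mul_nonneg hp_sub.le (sq_nonneg _)) (by positivity)

theorem strictConvexOn_rpow_mul_exp_div {p : ℝ} (hp : 1 < p) (a : ℝ) :
    StrictConvexOn ℝ (Ioi 0) (fun u : ℝ => u ^ p * exp (a / u)) := by
  refine strictConvexOn_of_deriv2_pos' (convex_Ioi 0)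
    (fun u hu => (hasDerivAt_rpow_mul_exp_div p a hu).continuousAt.continuousWithinAt)
    fun u (hu : 0 < u) => ?_
  rw [deriv2_rpow_mul_exp_div p a hu]
  exact mul_pos (by positivity) (quadratic_pos_of_one_lt hp hu.ne' a)

theorem adess_discounted_cost_strictConvex_paper_general {δ p : ℝ} (hδ : 0 < δ) (hp : 1 < p) :
    StrictConvexOn ℝ (Ioi (-1)) (fun ξ : ℝ => δ ^ (p / (1 + ξ)) * (1 + ξ) ^ p) := by
  have h_shift := (strictConvexOn_rpow_mul_exp_div hp (log δ * p)).translate_right 1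
  rw [preimage_const_add_Ioi, zero_sub] at h_shift
  refine h_shift.congr fun ξ _ => ?_
  rw [Function.comp_apply, rpow_def_of_pos hδ, mul_div_assoc, mul_comm]

theorem adess_discounted_cost_strictConvex_paper
    (δ : ℝ) (n : ℕ) (hδ0 : 0 < δ) (hδ1 : δ < 1) (hn : 2 ≤ n) :
    StrictConvexOn ℝ (Set.Ioi (1 / ((n : ℝ) - 1)))
      (fun ξ : ℝ => δ ^ ((n : ℝ) / (1 + ξ)) * (1 + ξ) ^ n) := by
  have hn_real : (1 : ℝ) < n := by exact_mod_cast hn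
  have h_left : -1 ≤ 1 / ((n : ℝ) - 1) :=
    neg_one_lt_zero.le.trans (one_div_pos.mpr (sub_pos.mpr hn_real)).le
  simpa only [rpow_natCast] using
    (adess_discounted_cost_strictConvex_paper_general hδ0 hn_real).subset
      (Ioi_subset_Ioi h_left) (convex_Ioi _)
end

section
/- Let δ ∈ (0,1) and let n ≥ 1 be a natural number. Then the function ξ ↦ δ^(n/(1+ξ))·(1+ξ)^n is strictly convex on (0, ∞). -/
/-!
Put `t = 1 + ξ`. The cost is `(t * δ ^ t⁻¹) ^ n`. The base is the perspective `t * f (t⁻¹)` of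
the strictly convex function `f = δ ^ ·`, hence strictly convex in `t > 0`, and raising it to the
power `n` is strictly increasing and convex on the nonnegative reals.
-/

open Set

section OrderedModule

variable {𝕜 E β γ : Type*}

theorem strictConvexOn_comp_of_mapsTo [Semiring 𝕜] [PartialOrder 𝕜] [AddCommMonoid E] [SMul 𝕜 E]
    [AddCommMonoid β] [PartialOrder β] [SMul 𝕜 β] [AddCommMonoid γ] [PartialOrder γ] [SMul 𝕜 γ]
    {s : Set E} {t : Set β} {f : E → β} {g : β → γ} (hg : ConvexOn 𝕜 t g)
    (hf : StrictConvexOn 𝕜 s f) (hg_mono : StrictMonoOn g t) (hst : MapsTo f s t) :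
    StrictConvexOn 𝕜 s (g ∘ f) := by
  refine ⟨hf.1, fun x hx y hy hxy a b ha hb hab => ?_⟩
  calc g (f (a • x + b • y)) < g (a • f x + b • f y) :=
        hg_mono (hst (hf.1 hx hy ha.le hb.le hab)) (hg.1 (hst hx) (hst hy) ha.le hb.le hab)
          (hf.2 hx hy hxy ha hb hab)
    _ ≤ a • g (f x) + b • g (f y) := hg.2 (hst hx) (hst hy) ha.le hb.le hab

variable [Field 𝕜] [AddCommGroup E] [Module 𝕜 E]

theorem inv_smul_eq_combo {a b x y : 𝕜} (hx : x ≠ 0) (hy : y ≠ 0) (hab : a + b = 1) (v : E) :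
    (a * x + b * y)⁻¹ • v =
      ((a * x + b * y)⁻¹ * (a * x)) • x⁻¹ • v + ((a * x + b * y)⁻¹ * (b * y)) • y⁻¹ • v := by
  rw [smul_smul, smul_smul, ← add_smul, mul_assoc _ (a * x), mul_assoc _ (b * y),
    mul_inv_cancel_right₀ hx, mul_inv_cancel_right₀ hy, ← mul_add, hab, mul_one]

variable [LinearOrder 𝕜] [IsStrictOrderedRing 𝕜]

theorem convex_setOf_pos_and_inv_smul_mem {s : Set E} (hs : Convex 𝕜 s) (v : E) :
    Convex 𝕜 {t : 𝕜 | 0 < t ∧ t⁻¹ • v ∈ s} := by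
  refine convex_iff_forall_pos.2 fun x ⟨hx, hxs⟩ y ⟨hy, hys⟩ a b ha hb hab => ?_
  have hu : 0 < a * x + b * y := by positivity
  refine ⟨hu, ?_⟩
  rw [smul_eq_mul, smul_eq_mul, inv_smul_eq_combo hx.ne' hy.ne' hab]
  exact hs hxs hys (by positivity) (by positivity) (by rw [← mul_add, inv_mul_cancel₀ hu.ne'])

theorem strictConvexOn_smul_apply_inv_smul [AddCommMonoid β] [PartialOrder β] [Module 𝕜 β]
    [PosSMulStrictMono 𝕜 β] {s : Set E} {f : E → β} (hf : StrictConvexOn 𝕜 s f)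
    {v : E} (hv : v ≠ 0) :
    StrictConvexOn 𝕜 {t : 𝕜 | 0 < t ∧ t⁻¹ • v ∈ s} fun t => t • f (t⁻¹ • v) := by
  refine ⟨convex_setOf_pos_and_inv_smul_mem hf.1 v,
    fun x ⟨hx, hxs⟩ y ⟨hy, hys⟩ hxy a b ha hb hab => ?_⟩
  have hne : x⁻¹ • v ≠ y⁻¹ • v := (smul_left_injective 𝕜 hv).ne (inv_injective.ne hxy)
  simp only [smul_eq_mul]
  set u := a * x + b * y with hu_def
  have hu : 0 < u := by positivity
  have jensen : f (u⁻¹ • v) < (u⁻¹ * (a * x)) • f (x⁻¹ • v) + (u⁻¹ * (b * y)) • f (y⁻¹ • v) := by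
    rw [hu_def, inv_smul_eq_combo hx.ne' hy.ne' hab, ← hu_def]
    exact hf.2 hxs hys hne (by positivity) (by positivity)
      (by rw [← mul_add, inv_mul_cancel₀ hu.ne'])
  calc u • f (u⁻¹ • v)
      < u • ((u⁻¹ * (a * x)) • f (x⁻¹ • v) + (u⁻¹ * (b * y)) • f (y⁻¹ • v)) :=
        smul_lt_smul_of_pos_left jensen hu
    _ = a • x • f (x⁻¹ • v) + b • y • f (y⁻¹ • v) := by
        simp only [smul_add, smul_smul, mul_inv_cancel_left₀ hu.ne']

end OrderedModule

section Real

variable {δ : ℝ}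

theorem strictConvexOn_rpow_left (hδ0 : 0 < δ) (hδ1 : δ ≠ 1) :
    StrictConvexOn ℝ univ fun x : ℝ => δ ^ x := by
  have hlog : Real.log δ ≠ 0 := Real.log_ne_zero_of_pos_of_ne_one hδ0 hδ1
  refine ⟨convex_univ, fun x _ y _ hxy a b ha hb hab => ?_⟩
  have hne : Real.log δ * x ≠ Real.log δ * y := (mul_right_injective₀ hlog).ne hxy
  have jensen := strictConvexOn_exp.2 (mem_univ _) (mem_univ _) hne ha hb hab
  simpa only [Real.rpow_def_of_pos hδ0, mul_add, mul_smul_comm] using jensen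

theorem strictConvexOn_mul_rpow_inv (hδ0 : 0 < δ) (hδ1 : δ ≠ 1) :
    StrictConvexOn ℝ (Ioi 0) fun t : ℝ => t * δ ^ t⁻¹ := by
  simpa only [smul_eq_mul, mul_one, mem_univ, and_true, Ioi_def] using
    strictConvexOn_smul_apply_inv_smul (strictConvexOn_rpow_left hδ0 hδ1) (one_ne_zero' ℝ)

theorem mul_rpow_inv_rpow (hδ : 0 ≤ δ) (p : ℝ) {t : ℝ} (ht : 0 ≤ t) :
    (t * δ ^ t⁻¹) ^ p = δ ^ (p / t) * t ^ p := by
  rw [Real.mul_rpow ht (Real.rpow_nonneg hδ _), ← Real.rpow_mul hδ, inv_mul_eq_div, mul_comm]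

theorem strictConvexOn_rpow_div_mul_rpow {p : ℝ} (hδ0 : 0 < δ) (hδ1 : δ ≠ 1) (hp : 1 ≤ p) :
    StrictConvexOn ℝ (Ioi 0) fun t : ℝ => δ ^ (p / t) * t ^ p := by
  have hbase : MapsTo (fun t : ℝ => t * δ ^ t⁻¹) (Ioi 0) (Ici 0) := fun t (ht : 0 < t) =>
    (mul_pos ht (Real.rpow_pos_of_pos hδ0 _)).le
  have hmono : StrictMonoOn (fun x : ℝ => x ^ p) (Ici 0) :=
    Real.strictMonoOn_rpow_Ici_of_exponent_pos (zero_lt_one.trans_le hp)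
  exact (strictConvexOn_comp_of_mapsTo (convexOn_rpow hp) (strictConvexOn_mul_rpow_inv hδ0 hδ1)
    hmono hbase).congr fun t (ht : 0 < t) => mul_rpow_inv_rpow hδ0.le p ht.le

end Real

theorem adess_discounted_cost_strictConvex_general {δ p : ℝ} (hδ0 : 0 < δ) (hδ1 : δ ≠ 1)
    (hp : 1 ≤ p) :
    StrictConvexOn ℝ (Ioi (-1)) fun ξ : ℝ => δ ^ (p / (1 + ξ)) * (1 + ξ) ^ p := by
  simpa only [preimage_const_add_Ioi, zero_sub, Function.comp_def] using
    (strictConvexOn_rpow_div_mul_rpow hδ0 hδ1 hp).translate_right 1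

theorem adess_discounted_cost_strictConvex
    (δ : ℝ) (n : ℕ) (hδ0 : 0 < δ) (hδ1 : δ < 1) (hn : 1 ≤ n) :
    StrictConvexOn ℝ (Set.Ioi (0 : ℝ))
      (fun ξ : ℝ => δ ^ ((n : ℝ) / (1 + ξ)) * (1 + ξ) ^ n) := by
  simpa only [Real.rpow_natCast] using
    (adess_discounted_cost_strictConvex_general hδ0 hδ1.ne (Nat.one_le_cast.2 hn)).subset
      (Ioi_subset_Ioi neg_one_lt_zero.le) (convex_Ioi 0)
end

section
/- Let δ ∈ (0,1), let c, p_B be reals with 0 < p_B ≤ c, let v ≥ 0, let S be any real number, and let K ≥ 1 and M ≥ 1 be natural numbers. Then the function on natural numbers B ↦ δ^(K+B−1)·(v + p_B·(M+B)) − c·(S + ∑_{b=0}^{B−1} δ^(K+b)) is strictly decreasing in B. In particular it is maximized at B = 0, so the attacker optimally broadcasts its chain as soon as it reaches the canonical boundary. -/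
open Finset

/-- The attacker's discounted profit from broadcasting `B` blocks past the canonical boundary, which
is reached at time `K` and discounted cost `c * S`. The revenue is an arbitrary sequence `R`,
collected at time `K + B - 1`; each further block costs `c`, the first one (`b = 0`) at time `K`.
Times are real, so the subtraction in `K + B - 1` is not truncated. -/
noncomputable def broadcastProfit (δ c S K : ℝ) (R : ℕ → ℝ) (B : ℕ) : ℝ :=
  δ ^ (K + B - 1) * R B - c * (S + ∑ b ∈ range B, δ ^ (K + b))

-- Waiting for one more block delays the revenue `R B` by one period, losing the fraction `1 - δ`
-- of it, and buys the increment `R (B + 1) - R B`, one period later, at the price `c`.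
theorem broadcastProfit_sub_broadcastProfit_succ {δ : ℝ} (hδ : δ ≠ 0) (c S K : ℝ) (R : ℕ → ℝ)
    (B : ℕ) :
    broadcastProfit δ c S K R B - broadcastProfit δ c S K R (B + 1) =
      δ ^ (K + B - 1) * ((1 - δ) * R B + δ * (c - (R (B + 1) - R B))) := by
  have next_time : K + ((B + 1 : ℕ) : ℝ) - 1 = K + B := by push_cast; ring
  have next_discount : δ ^ (K + B) = δ ^ (K + B - 1) * δ := by
    rw [← Real.rpow_add_one hδ, sub_add_cancel]
  simp only [broadcastProfit, sum_range_succ, next_time, next_discount]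
  ring

theorem adess_broadcast_at_canonical_boundary_general {δ c : ℝ} (S K : ℝ) {R : ℕ → ℝ}
    (hδ0 : 0 < δ) (hδ1 : δ < 1) (R_pos : ∀ B, 0 < R B) (R_succ_sub_le : ∀ B, R (B + 1) - R B ≤ c) :
    StrictAnti (broadcastProfit δ c S K R) ∧
      ∀ B, broadcastProfit δ c S K R B ≤ broadcastProfit δ c S K R 0 := by
  have profit_strictAnti : StrictAnti (broadcastProfit δ c S K R) := by
    refine strictAnti_nat_of_succ_lt fun B => sub_pos.mp ?_
    rw [broadcastProfit_sub_broadcastProfit_succ hδ0.ne']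
    have delay_loss : 0 < (1 - δ) * R B := mul_pos (sub_pos.mpr hδ1) (R_pos B)
    have mining_loss : 0 ≤ δ * (c - (R (B + 1) - R B)) :=
      mul_nonneg hδ0.le (sub_nonneg.mpr (R_succ_sub_le B))
    exact mul_pos (Real.rpow_pos_of_pos hδ0 _) (add_pos_of_pos_of_nonneg delay_loss mining_loss)
  exact ⟨profit_strictAnti, fun B => profit_strictAnti.antitone B.zero_le⟩

theorem adess_broadcast_at_canonical_boundary
    (δ c p_B v S : ℝ) (K M : ℕ)
    (hδ0 : 0 < δ) (hδ1 : δ < 1) (hpB : 0 < p_B) (hpBc : p_B ≤ c)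
    (hv : 0 ≤ v) (hK : 1 ≤ K) (hM : 1 ≤ M) :
    StrictAnti
      (fun B : ℕ =>
        δ ^ ((K : ℝ) + B - 1) * (v + p_B * ((M : ℝ) + B)) -
          c * (S + ∑ b ∈ Finset.range B, δ ^ ((K : ℝ) + b))) ∧
    ∀ B : ℕ,
      δ ^ ((K : ℝ) + B - 1) * (v + p_B * ((M : ℝ) + B)) -
          c * (S + ∑ b ∈ Finset.range B, δ ^ ((K : ℝ) + b)) ≤
        δ ^ ((K : ℝ) + 0 - 1) * (v + p_B * ((M : ℝ) + 0)) - c * (S + 0) := by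
  have revenue_pos (B : ℕ) : 0 < v + p_B * ((M : ℝ) + B) := by positivity
  have revenue_succ_sub_le (B : ℕ) :
      v + p_B * ((M : ℝ) + (B + 1 : ℕ)) - (v + p_B * ((M : ℝ) + B)) ≤ c := by
    push_cast; linarith
  obtain ⟨profit_strictAnti, profit_le⟩ :=
    adess_broadcast_at_canonical_boundary_general S K hδ0 hδ1 revenue_pos revenue_succ_sub_le
  exact ⟨profit_strictAnti, by
    simpa only [broadcastProfit, Nat.cast_zero, range_zero, sum_empty] using profit_le⟩
end

section
/- Let δ ∈ (0,1), let n ≥ 1 be a natural number, and let ρ > 0 and a > 0 be reals. Then the function ξ ↦ δ^(n/(1+ρ+a·ξ))·(1+ρ+a·ξ)^n is strictly increasing on [0, ∞). -/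
open Set

theorem monotoneOn_rpow_const_div {δ c : ℝ} (hδ0 : 0 < δ) (hδ1 : δ ≤ 1) (hc : 0 ≤ c) :
    MonotoneOn (fun g : ℝ => δ ^ (c / g)) (Ioi 0) := fun _ hx _ _ hxy =>
  Real.rpow_le_rpow_of_exponent_ge hδ0 hδ1 (div_le_div_of_nonneg_left hc hx hxy)

theorem strictMonoOn_rpow_const_div_mul_rpow {δ c p : ℝ} (hδ0 : 0 < δ) (hδ1 : δ ≤ 1)
    (hc : 0 ≤ c) (hp : 0 < p) :
    StrictMonoOn (fun g : ℝ => δ ^ (c / g) * g ^ p) (Ioi 0) := by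
  intro x hx y hy hxy
  have discount_le : δ ^ (c / x) ≤ δ ^ (c / y) :=
    monotoneOn_rpow_const_div hδ0 hδ1 hc hx hy hxy.le
  have growth_lt : x ^ p < y ^ p := Real.rpow_lt_rpow (le_of_lt hx) hxy hp
  exact mul_lt_mul' discount_le growth_lt (Real.rpow_nonneg (le_of_lt hx) p)
    (Real.rpow_pos_of_pos hδ0 _)

theorem adess_affine_growth_cost_strictMono_general {δ p ρ a : ℝ}
    (hδ0 : 0 < δ) (hδ1 : δ ≤ 1) (hp : 0 < p) (ha : 0 < a) :
    StrictMonoOn (fun ξ : ℝ => δ ^ (p / (1 + ρ + a * ξ)) * (1 + ρ + a * ξ) ^ p)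
      {ξ | 0 < 1 + ρ + a * ξ} := by
  have growth_strictMono : StrictMono fun ξ : ℝ => 1 + ρ + a * ξ :=
    (strictMono_mul_left_of_pos ha).const_add (1 + ρ)
  exact (strictMonoOn_rpow_const_div_mul_rpow hδ0 hδ1 hp.le hp).comp
    (growth_strictMono.strictMonoOn _) fun _ hξ => hξ

theorem adess_affine_growth_cost_strictMono
    (δ : ℝ) (n : ℕ) (ρ a : ℝ)
    (hδ0 : 0 < δ) (hδ1 : δ < 1) (hn : 1 ≤ n) (hρ : 0 < ρ) (ha : 0 < a) :
    StrictMonoOn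
      (fun ξ : ℝ => δ ^ ((n : ℝ) / (1 + ρ + a * ξ)) * (1 + ρ + a * ξ) ^ n)
      (Set.Ici (0 : ℝ)) := by
  have growth_pos : Ici (0 : ℝ) ⊆ {ξ | 0 < 1 + ρ + a * ξ} := fun ξ (hξ : 0 ≤ ξ) =>
    show 0 < 1 + ρ + a * ξ by positivity
  simpa only [Real.rpow_natCast] using
    (adess_affine_growth_cost_strictMono_general hδ0 hδ1.le (Nat.cast_pos.mpr hn) ha).mono
      growth_pos
end

section
/- Let δ ∈ (0,1], c > 0, 0 < p_B ≤ c, v ≥ 0, let ρ > 0 and a > 0 be reals, and let N ≥ 1 be a natural number. Then there exists ξ₀ > 0 such that for all ξ ≥ ξ₀: δ^(N−1)·(v + p_B·⌈N·(1+ξ)⌉) − c·∑_{n=0}^{⌈N·(1+ξ)⌉−1} δ^(n/(1+ρ+a·ξ))·(1+ρ+a·ξ)^n < 0. -/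
open Finset

/-!
Since `δ ^ (n / g) * g ^ n = (δ ^ g⁻¹ * g) ^ n`, the attacker's cost is a geometric sum whose ratio
tends to infinity with the growth factor `g`. As soon as the ratio exceeds `2`, the cost grows
exponentially in the number of blocks, while the revenue is only affine in that number.
-/

open Filter Topology

theorem rpow_div_mul_pow {x : ℝ} (hx : 0 ≤ x) (y : ℝ) (n : ℕ) :
    x ^ ((n : ℝ) / y) * y ^ n = (x ^ y⁻¹ * y) ^ n := by
  rw [mul_pow, ← Real.rpow_mul_natCast hx, div_eq_inv_mul]

theorem tendsto_rpow_inv_mul_self_atTop {x : ℝ} (hx : 0 < x) :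
    Tendsto (fun y : ℝ => x ^ y⁻¹ * y) atTop atTop := by
  have rpow_inv_tendsto_one : Tendsto (fun y : ℝ => x ^ y⁻¹) atTop (𝓝 1) := by
    simpa [Function.comp_def] using
      (Real.continuousAt_const_rpow hx.ne').tendsto.comp tendsto_inv_atTop_zero
  exact rpow_inv_tendsto_one.pos_mul_atTop one_pos tendsto_id

theorem eventually_affine_lt_mul_pow {r c : ℝ} (hr : 1 < r) (hc : 0 < c) (A B : ℝ) :
    ∀ᶠ m : ℕ in atTop, A + B * m < c * r ^ m := by
  have quotient_tendsto_zero :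
      Tendsto (fun m : ℕ => A * ((m : ℝ) ^ 0 / r ^ m) + B * ((m : ℝ) ^ 1 / r ^ m))
        atTop (𝓝 0) := by
    simpa only [mul_zero, add_zero] using
      ((tendsto_pow_const_div_const_pow_of_one_lt 0 hr).const_mul A).add
        ((tendsto_pow_const_div_const_pow_of_one_lt 1 hr).const_mul B)
  filter_upwards [quotient_tendsto_zero.eventually_lt_const hc] with m hm
  have r_pow_pos : 0 < r ^ m := by positivity
  rw [← div_lt_iff₀ r_pow_pos]
  calc (A + B * m) / r ^ m = A * ((m : ℝ) ^ 0 / r ^ m) + B * ((m : ℝ) ^ 1 / r ^ m) := by ring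
    _ < c := hm

theorem eventually_affine_lt_mul_geom_sum {r c : ℝ} (hr : 1 < r) (hc : 0 < c) (A B : ℝ) :
    ∀ᶠ m : ℕ in atTop, A + B * m < c * ∑ n ∈ range m, r ^ n := by
  have r_sub_one_pos : 0 < r - 1 := sub_pos.mpr hr
  filter_upwards [eventually_affine_lt_mul_pow hr hc (A * (r - 1) + c) (B * (r - 1))] with m hm
  rw [geom_sum_eq hr.ne', ← mul_div_assoc, lt_div_iff₀ r_sub_one_pos]
  linarith

theorem eventually_affine_lt_mul_geom_sum_of_tendsto {ι : Type*} {l : Filter ι} {b : ι → ℝ}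
    {M : ι → ℕ} {c : ℝ} (hb : Tendsto b l atTop) (hM : Tendsto M l atTop) (hc : 0 < c)
    (A B : ℝ) : ∀ᶠ i in l, A + B * M i < c * ∑ n ∈ range (M i), b i ^ n := by
  filter_upwards [hb.eventually_ge_atTop 2,
    hM.eventually (eventually_affine_lt_mul_geom_sum one_lt_two hc A B)] with i two_le hi
  calc A + B * M i < c * ∑ n ∈ range (M i), (2 : ℝ) ^ n := hi
    _ ≤ c * ∑ n ∈ range (M i), b i ^ n := by gcongr

theorem tendsto_ceil_mul_one_add_atTop {x : ℝ} (hx : 0 < x) :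
    Tendsto (fun ξ : ℝ => ⌈x * (1 + ξ)⌉₊) atTop atTop :=
  tendsto_nat_ceil_atTop.comp
    ((tendsto_atTop_add_const_left atTop 1 tendsto_id).const_mul_atTop hx)

theorem adess_affine_growth_attack_unprofitable_general {δ c : ℝ} {N : ℕ} {g : ℝ → ℝ}
    (hδ : 0 < δ) (hc : 0 < c) (hN : 1 ≤ N) (hg : Tendsto g atTop atTop) (p_B v : ℝ) :
    ∀ᶠ ξ in atTop,
      δ ^ ((N : ℝ) - 1) * (v + p_B * (⌈(N : ℝ) * (1 + ξ)⌉₊ : ℝ)) -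
        c * ∑ n ∈ range ⌈(N : ℝ) * (1 + ξ)⌉₊, δ ^ ((n : ℝ) / g ξ) * g ξ ^ n < 0 := by
  have blocks_tendsto := tendsto_ceil_mul_one_add_atTop (Nat.cast_pos.mpr hN : (0 : ℝ) < N)
  have ratio_tendsto := (tendsto_rpow_inv_mul_self_atTop hδ).comp hg
  filter_upwards [eventually_affine_lt_mul_geom_sum_of_tendsto ratio_tendsto blocks_tendsto hc
    (δ ^ ((N : ℝ) - 1) * v) (δ ^ ((N : ℝ) - 1) * p_B)] with ξ revenue_lt_cost
  simp only [rpow_div_mul_pow hδ.le]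
  rwa [sub_neg, mul_add, ← mul_assoc]

theorem adess_affine_growth_attack_unprofitable
    (δ c p_B v ρ a : ℝ) (N : ℕ)
    (hδ0 : 0 < δ) (hδ1 : δ ≤ 1) (hc : 0 < c) (hpB : 0 < p_B) (hpBc : p_B ≤ c)
    (hv : 0 ≤ v) (hρ : 0 < ρ) (ha : 0 < a) (hN : 1 ≤ N) :
    ∃ ξ₀ > (0 : ℝ), ∀ ξ ≥ ξ₀,
      δ ^ ((N : ℝ) - 1) * (v + p_B * (⌈(N : ℝ) * (1 + ξ)⌉₊ : ℝ)) -
        c * ∑ n ∈ Finset.range ⌈(N : ℝ) * (1 + ξ)⌉₊,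
          δ ^ ((n : ℝ) / (1 + ρ + a * ξ)) * (1 + ρ + a * ξ) ^ n < 0 := by
  have growth_tendsto : Tendsto (fun ξ : ℝ => 1 + ρ + a * ξ) atTop atTop :=
    tendsto_atTop_add_const_left _ _ (tendsto_id.const_mul_atTop ha)
  exact ((eventually_gt_atTop 0).and (eventually_forall_ge_atTop.mpr
    (adess_affine_growth_attack_unprofitable_general hδ0 hc hN growth_tendsto p_B v))).exists
end
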